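/- arXiv:2403.19378 — 3 statements merged into one kernel-verified Lean document; each statement's English description precedes it below -/
import Mathlib

section
/- Let Φ be a set of functional dependencies over a finite schema 𝓡 and let P = [C_1,…,C_m] be an ordered partition of 𝓡. If Φ is forward repairable over P, then Φ is sequentially repairable over P. (Proposition 1 of the paper.) -/
/-- A functional dependency over a set of attributes `α`: a pair `X → a`
with left-hand side `X` (a finite set of attributes) and right-hand side `a`. -/
structure FD (α : Type*) where
  lhs : Finset α
  rhs : α

/-- A relation `R : T → α → V` (assigning to each tuple identifier a tuple)
satisfies the FD `φ` if tuples agreeing on `lhs φ` agree on `rhs φ`. -/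
def SatFD {α V T : Type*} (R : T → α → V) (φ : FD α) : Prop :=
  ∀ t1 t2 : T, (∀ b ∈ φ.lhs, R t1 b = R t2 b) → R t1 φ.rhs = R t2 φ.rhs

/-- `R` satisfies a set of FDs if it satisfies every FD in the set. -/
def SatSet {α V T : Type*} (R : T → α → V) (Φ : Set (FD α)) : Prop :=
  ∀ φ ∈ Φ, SatFD R φ

/-- The projection `Φ[Z]` of a set of FDs over a set of attributes `Z`. -/
def proj {α : Type*} (Φ : Set (FD α)) (Z : Finset α) : Set (FD α) :=
  {φ | φ ∈ Φ ∧ φ.lhs ⊆ Z ∧ φ.rhs ∈ Z}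

/-- The prefix union `S_i = C_1 ∪ … ∪ C_i` of an ordered partition. -/
def prefS {α : Type*} [DecidableEq α] (P : List (Finset α)) (i : ℕ) : Finset α :=
  (P.take i).foldr (· ∪ ·) ∅

/-- `P = [C_1, …, C_m]` is an ordered partition of the (finite) schema:
a list of pairwise disjoint nonempty classes whose union is the whole schema. -/
def OrderedPartition {α : Type*} [DecidableEq α] [Fintype α] (P : List (Finset α)) : Prop :=
  (∀ C ∈ P, C.Nonempty) ∧ P.Pairwise Disjoint ∧ P.foldr (· ∪ ·) ∅ = Finset.univ

/-- `Φ` is forward repairable over `P`: for every `i`, every FD in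
`Φ[S_i] \ Φ[S_{i-1}]` has its right-hand side in `C_i`. -/
def ForwardRepairable {α : Type*} [DecidableEq α] (P : List (Finset α)) (Φ : Set (FD α)) : Prop :=
  ∀ (i : ℕ) (h : i < P.length),
    ∀ φ ∈ proj Φ (prefS P (i + 1)) \ proj Φ (prefS P i), φ.rhs ∈ P.get ⟨i, h⟩

/-- `Φ` is sequentially repairable over `P` (for tuple ids `T` and values `V`):
every partial repair `R_{i-1}` of `Φ[S_{i-1}]` can be turned into a partial repair
of `Φ[S_i]` by modifying only attributes outside `S_{i-1}`. -/
def SeqRepairable {α : Type*} [DecidableEq α] (T V : Type*) (P : List (Finset α)) (Φ : Set (FD α)) : Prop :=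
  ∀ i : ℕ, i < P.length →
    ∀ Rprev : T → α → V, SatSet Rprev (proj Φ (prefS P i)) →
      ∃ Rnext : T → α → V, SatSet Rnext (proj Φ (prefS P (i + 1))) ∧
        ∀ t : T, ∀ a ∈ prefS P i, Rnext t a = Rprev t a

theorem mem_foldr_union {α : Type*} [DecidableEq α] {L : List (Finset α)} {a : α} :
    a ∈ L.foldr (· ∪ ·) ∅ ↔ ∃ C ∈ L, a ∈ C := by
  induction L with
  | nil => simp
  | cons C L ih => simp [ih]

theorem mem_prefS {α : Type*} [DecidableEq α] {P : List (Finset α)} {i : ℕ} {a : α} :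
    a ∈ prefS P i ↔ ∃ C ∈ P.take i, a ∈ C :=
  mem_foldr_union

theorem disjoint_prefS_get {α : Type*} [DecidableEq α] {P : List (Finset α)}
    (hP : P.Pairwise Disjoint) {i : ℕ} (hi : i < P.length) :
    Disjoint (prefS P i) (P.get ⟨i, hi⟩) := by
  refine Finset.disjoint_left.2 fun a ha hai => ?_
  obtain ⟨C, hC, haC⟩ := mem_prefS.1 ha
  obtain ⟨j, hj, rfl⟩ := List.mem_take_iff_getElem.1 hC
  have hlt : j < i := lt_of_lt_of_le hj (min_le_left _ _)
  exact Finset.disjoint_left.1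
    (List.pairwise_iff_getElem.1 hP j i (hlt.trans hi) hi hlt) haC hai

/-- Satisfaction of an FD over `Z` depends only on the values of the attributes in `Z`. -/
theorem SatFD.congr {α V T : Type*} {R R' : T → α → V} {φ : FD α} {Z : Finset α}
    (hR : SatFD R φ) (hlhs : φ.lhs ⊆ Z) (hrhs : φ.rhs ∈ Z)
    (h : ∀ t, ∀ a ∈ Z, R' t a = R t a) : SatFD R' φ := by
  intro t1 t2 hagree
  rw [h t1 _ hrhs, h t2 _ hrhs]
  refine hR t1 t2 fun b hb => ?_
  rw [← h t1 b (hlhs hb), ← h t2 b (hlhs hb), hagree b hb]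

/-- Proposition 1: forward repairability implies sequential repairability. -/
theorem forward_imp_sequential {α V T : Type*} [DecidableEq α] [Fintype α] [Fintype T] [Nonempty V]
    (P : List (Finset α)) (Φ : Set (FD α))
    (hP : OrderedPartition P)
    (hfwd : ForwardRepairable P Φ) :
    SeqRepairable T V P Φ := by
  intro i hi R hR
  obtain ⟨v⟩ := ‹Nonempty V›
  have hagree : ∀ t : T, ∀ a ∈ prefS P i,
      (if a ∈ prefS P i then R t a else v) = R t a := fun t a ha => if_pos ha
  refine ⟨fun t a => if a ∈ prefS P i then R t a else v, fun φ hφ => ?_, hagree⟩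
  by_cases hold : φ ∈ proj Φ (prefS P i)
  · exact (hR φ hold).congr hold.2.1 hold.2.2 hagree
  · have hnew : φ.rhs ∉ prefS P i :=
      Finset.disjoint_right.1 (disjoint_prefS_get hP.2.1 hi) (hfwd i hi φ ⟨hφ, hold⟩)
    intro t1 t2 _
    simp [hnew]
end

section
/- Let Φ be a set of functional dependencies over a finite schema 𝓡 (in the paper, a minimal cover of the given constraints), and let P = [C_1,…,C_m] be an ordered partition of 𝓡 induced by the preorder P⁺ obtained from Φ. Then Φ is forward repairable over P. (Theorem 1(i) of the paper.) -/
/-- The base relation `P_Φ` obtained from a set of FDs: it contains all pairs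
`(a, a)` and all pairs `(b, a)` with `b ∈ X` for some FD `X → a` in `Φ`. -/
def PPhi {α : Type*} (Φ : Set (FD α)) : α → α → Prop :=
  fun b a => b = a ∨ ∃ φ ∈ Φ, φ.rhs = a ∧ b ∈ φ.lhs

/-- The preorder `P⁺` obtained from `Φ`: the transitive closure of `P_Φ`. -/
def Pplus {α : Type*} (Φ : Set (FD α)) : α → α → Prop :=
  Relation.TransGen (PPhi Φ)

/-- The equivalence `a ≡_{P⁺} a'`: mutual `P⁺`-comparability. -/
def eqvP {α : Type*} (Φ : Set (FD α)) (a a' : α) : Prop :=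
  Pplus Φ a a' ∧ Pplus Φ a' a

/-- The ordered partition `P` is induced by the preorder `P⁺` obtained from `Φ`:
its classes are exactly the equivalence classes of `≡_{P⁺}`, and earlier classes
are never `P⁺`-above later ones. -/
def InducedBy {α : Type*} (P : List (Finset α)) (Φ : Set (FD α)) : Prop :=
  (∀ a a' : α, eqvP Φ a a' ↔
      ∃ (i : ℕ) (h : i < P.length), a ∈ P.get ⟨i, h⟩ ∧ a' ∈ P.get ⟨i, h⟩) ∧
  (∀ (i j : ℕ) (hi : i < P.length) (hj : j < P.length), i < j →
      ∀ a ∈ P.get ⟨i, hi⟩, ∀ a' ∈ P.get ⟨j, hj⟩, ¬ Pplus Φ a' a)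

theorem mem_foldr_union_iff {α : Type*} [DecidableEq α] (L : List (Finset α)) (a : α) :
    a ∈ L.foldr (· ∪ ·) ∅ ↔ ∃ C ∈ L, a ∈ C := by
  induction L with
  | nil => simp
  | cons C L ih => simp [ih]

theorem mem_prefS_iff {α : Type*} [DecidableEq α] (P : List (Finset α)) (i : ℕ) (a : α) :
    a ∈ prefS P i ↔ ∃ (j : ℕ) (h : j < P.length), j < i ∧ a ∈ P.get ⟨j, h⟩ := by
  rw [prefS, mem_foldr_union_iff]
  constructor
  · rintro ⟨C, hC, ha⟩
    obtain ⟨j, hj, rfl⟩ := List.mem_take_iff_getElem.mp hC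
    exact ⟨j, by omega, by omega, ha⟩
  · rintro ⟨j, h, hji, ha⟩
    exact ⟨P[j], List.mem_take_iff_getElem.mpr ⟨j, by omega, rfl⟩, ha⟩

/-- Theorem 1(i): a partition induced by the preorder `P⁺` obtained from `Φ`
is forward repairable for `Φ`. -/
theorem induced_forwardRepairable {α : Type*} [DecidableEq α] [Fintype α]
    (P : List (Finset α)) (Φ : Set (FD α))
    (hP : OrderedPartition P)
    (hind : InducedBy P Φ) :
    ForwardRepairable P Φ := by
  rintro i h φ ⟨⟨hφ, hlhs, hrhs⟩, hnot⟩
  obtain ⟨j, hj, hji, hrj⟩ := (mem_prefS_iff _ _ _).mp hrhs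
  obtain rfl | hlt : j = i ∨ j < i := by omega
  · exact hrj
  refine absurd ⟨hφ, fun b hb => ?_, (mem_prefS_iff _ _ _).mpr ⟨j, hj, hlt, hrj⟩⟩ hnot
  obtain ⟨k, hk, hki, hbk⟩ := (mem_prefS_iff _ _ _).mp (hlhs hb)
  have hkj : k ≤ j := by
    by_contra! hjk
    exact hind.2 j k hj hk hjk _ hrj b hbk (.single (.inr ⟨φ, hφ, rfl, hb⟩))
  exact (mem_prefS_iff _ _ _).mpr ⟨k, hk, by omega, hbk⟩
end

section
/- Let R be a relation over a finite set T of tuple identifiers satisfying the unary FD {a'}→a and the FD X→a, where a ≠ a'. Let R' be a relation over T such that R'(t)(c) = R(t)(c) for every t ∈ T and every attribute c ≠ a', and such that for every t ∈ T there exists s ∈ T with R(s)(b) = R(t)(b) for all b ∈ X and R'(t)(a') = R(s)(a') (each tuple's new a'-value is the old a'-value of some tuple agreeing with it on X). Then R' satisfies {a'}→a. (The donor argument at the heart of the proof of Proposition 2.) -/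
/-- The donor argument at the heart of the proof of Proposition 2: if `R`
satisfies the unary FD `{a'} → a` and the FD `X → a`, and `R'` changes only
attribute `a'`, giving each tuple the old `a'`-value of some tuple agreeing
with it on `X`, then `R'` still satisfies `{a'} → a`. -/
theorem donor_argument {α V T : Type*} [Fintype T]
    (X : Finset α) (a a' : α) (hne : a ≠ a')
    (R R' : T → α → V)
    (h1 : SatFD R ⟨{a'}, a⟩)
    (h2 : SatFD R ⟨X, a⟩)
    (hkeep : ∀ (t : T) (c : α), c ≠ a' → R' t c = R t c)
    (hdonor : ∀ t : T, ∃ s : T, (∀ b ∈ X, R s b = R t b) ∧ R' t a' = R s a') :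
    SatFD R' ⟨{a'}, a⟩ := by
  intro t1 t2 h
  obtain ⟨s1, hs1, e1⟩ := hdonor t1
  obtain ⟨s2, hs2, e2⟩ := hdonor t2
  have hR : ∀ b ∈ ({a'} : Finset α), R s1 b = R s2 b := by
    intro b hb
    rw [Finset.mem_singleton.mp hb, ← e1, ← e2]
    exact h a' (Finset.mem_singleton_self a')
  calc R' t1 a = R t1 a := hkeep t1 a hne
    _ = R s1 a := (h2 s1 t1 hs1).symm
    _ = R s2 a := h1 s1 s2 hR
    _ = R t2 a := h2 s2 t2 hs2
    _ = R' t2 a := (hkeep t2 a hne).symm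
end
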